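/- Let (f,T) ∈ 𝓒^1 × 𝓔^1. If either (i) Ω(f,T) is T-minimal, or (ii) (f,T) has a unique maximizing measure, then K(f,T) = Ω(f,T). -/

import Mathlib

/-!
Everything rests on backward shadowing (`HasPullback`, proved in `hasPullback`): an orbit segment
can be replaced by one ending at any prescribed point `w`, the change in the initial point and in
the Birkhoff sum of `f` being at most a uniform constant times the distance from `w` to the old
endpoint. On the universal cover this is the contraction of the inverse branches of `Fⁿ`.

`Ω ⊆ K`. Let `u_n(x)` be the largest Birkhoff sum of length `n` along segments ending at `x`
(`maxSum`). Backward shadowing makes the `u_n` equi-Lipschitz. Integrating against invariant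
measures gives `sup u_n ≥ nβ`, while concatenating copies of one segment and taking a limit of
empirical measures (`exists_limit_measure`) gives `sup u_n ≤ nβ + C`. Hence `limsup (u_n - nβ)` is a
Lipschitz calibrated sub-action (`Gset_nonempty`). For every sub-action `g` one has `Ω ⊆ Λ_g`
(`omega_subset_lambda`): the non-negative defects `g ∘ T + β - g - f` have almost zero sum along the
segments that witness non-wandering.

`K ⊆ Ω`. Let `x ∈ Λ_g`. If the `ω`-limit set of `x` meets the set of limits of far preimages of `x`
in `Λ*_g` (`alphaLim`), then the forward orbit can be joined to a backward orbit near a common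
point; since Birkhoff sums of `f - β` telescope to differences of `g` on `Λ*_g`, this shows `x ∈ Ω`
(`mem_omegaSet_of_inter`). The two sets do meet. If `Ω` is minimal, every `ω`-limit set of a point
of `Λ*_g` is a closed invariant subset of `Ω`, hence equal to `Ω`. If the maximizing measure is
unique, each of the two limit sets carries a maximizing measure (`exists_maximizing`), hence both
have full measure for the same measure.
-/

open MeasureTheory Topology Filter Set
open scoped UniformConvergence

noncomputable section

/-- The circle `ℝ/ℤ`. -/
abbrev Circle1 : Type := AddCircle (1 : ℝ)

/-- The canonical representative in `[0,1)` of a point of `ℝ/ℤ`. -/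
noncomputable def rep (z : Circle1) : ℝ := (AddCircle.equivIco 1 0 z : ℝ)

/-- The circle map induced by a lift `F : ℝ → ℝ`. -/
noncomputable def cmap (F : ℝ → ℝ) : Circle1 → Circle1 := fun z => ((F (rep z) : ℝ) : Circle1)

/-- The data determining the `C^r` topology: all derivatives of order `≤ r`, viewed in the
space of functions `ℝ → ℝ` with the uniform-convergence topology. -/
noncomputable def crSeq (r : ℕ∞) (f : ℝ → ℝ) : ℕ → (ℝ →ᵤ ℝ) :=
  fun k => UniformFun.ofFun (if (k : ℕ∞) ≤ r then iteratedDeriv k f else 0)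

/-- The space `𝓒^r` of `C^r` functions `ℝ/ℤ → ℝ`. -/
def CrFun (r : ℕ∞) : Type := {f : Circle1 → ℝ // ContDiff ℝ r fun x : ℝ => f ↑x}

/-- The `C^r` topology on `𝓒^r`. -/
noncomputable instance (r : ℕ∞) : TopologicalSpace (CrFun r) :=
  TopologicalSpace.induced (fun f : CrFun r => crSeq r fun x : ℝ => f.1 ↑x) inferInstance

/-- `F : ℝ → ℝ` is a lift of a `C^r` expanding circle map: it is `C^r`, sends `x+1` to
`F x + d` for a fixed integer `d`, and `|(Fⁿ)'| ≥ C λⁿ` for some `C > 0`, `λ > 1`. -/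
def ExpandingLift (r : ℕ∞) (F : ℝ → ℝ) : Prop :=
  ContDiff ℝ r F ∧ (∃ d : ℤ, ∀ x : ℝ, F (x + 1) = F x + d) ∧
    ∃ C > (0 : ℝ), ∃ l > (1 : ℝ), ∀ n : ℕ, 1 ≤ n → ∀ x : ℝ, C * l ^ n ≤ |deriv (F^[n]) x|

/-- The space `𝓔^r` of (lifts of) `C^r` expanding circle maps, with the `C^r` topology. -/
def ExpMap (r : ℕ∞) : Type := {F : ℝ → ℝ // ExpandingLift r F}

noncomputable instance (r : ℕ∞) : TopologicalSpace (ExpMap r) :=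
  TopologicalSpace.induced (fun F : ExpMap r => crSeq r F.1) inferInstance

/-- `μ` is a `T`-invariant Borel probability measure. -/
def InvProb (T : Circle1 → Circle1) (μ : Measure Circle1) : Prop :=
  IsProbabilityMeasure μ ∧ μ.map T = μ

/-- `β(f,T)`, the maximal ergodic average. -/
noncomputable def beta (f : Circle1 → ℝ) (T : Circle1 → Circle1) : ℝ :=
  sSup ((fun μ : Measure Circle1 => ∫ x, f x ∂μ) '' {μ | InvProb T μ})

/-- `μ` is a maximizing measure for `(f,T)`. -/
def IsMaximizing (f : Circle1 → ℝ) (T : Circle1 → Circle1) (μ : Measure Circle1) : Prop :=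
  InvProb T μ ∧ ∫ x, f x ∂μ = beta f T

/-- `μ` is a periodic measure: an invariant measure supported on a periodic orbit. -/
def IsPeriodicMeasure (T : Circle1 → Circle1) (μ : Measure Circle1) : Prop :=
  InvProb T μ ∧ ∃ x : Circle1, ∃ n : ℕ, 0 < n ∧ T^[n] x = x ∧
    μ (Set.range fun k : ℕ => T^[k] x) = 1

/-- `(f,T)` is uniquely maximized by a periodic measure. -/
def UniqMaxPeriodic (f : Circle1 → ℝ) (T : Circle1 → Circle1) : Prop :=
  ∃ μ : Measure Circle1, IsMaximizing f T μ ∧ IsPeriodicMeasure T μ ∧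
    ∀ ν : Measure Circle1, IsMaximizing f T ν → ν = μ

/-- A (continuous) sub-action for `(f,T)`. -/
def IsSubaction (f : Circle1 → ℝ) (T : Circle1 → Circle1) (g : Circle1 → ℝ) : Prop :=
  Continuous g ∧ ∀ x, g x + f x ≤ g (T x) + beta f T

/-- A calibrated sub-action for `(f,T)`. -/
def IsCalibrated (f : Circle1 → ℝ) (T : Circle1 → Circle1) (g : Circle1 → ℝ) : Prop :=
  IsSubaction f T g ∧ ∀ x, ∃ y, T y = x ∧ g y + f y = g x + beta f T

/-- `G_{f,T}`: the set of Lipschitz calibrated sub-actions of `(f,T)`. -/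
def Gset (f : Circle1 → ℝ) (T : Circle1 → Circle1) : Set (Circle1 → ℝ) :=
  {g | (∃ K : NNReal, LipschitzWith K g) ∧ IsCalibrated f T g}

/-- The set `E_{f,T,g}`. -/
def Eset (f : Circle1 → ℝ) (T : Circle1 → Circle1) (g : Circle1 → ℝ) : Set Circle1 :=
  {x | g x + f x = g (T x) + beta f T}

/-- The set `Λ*_{f,T,g}`. -/
def LambdaStar (f : Circle1 → ℝ) (T : Circle1 → Circle1) (g : Circle1 → ℝ) : Set Circle1 :=
  {x | ∀ n : ℕ, T^[n] x ∈ Eset f T g}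

/-- The set `Λ_{f,T,g}`. -/
def Lambda (f : Circle1 → ℝ) (T : Circle1 → Circle1) (g : Circle1 → ℝ) : Set Circle1 :=
  ⋂ n : ℕ, T^[n] '' LambdaStar f T g

/-- The set `K(f,T)`. -/
def Kset (f : Circle1 → ℝ) (T : Circle1 → Circle1) : Set Circle1 :=
  ⋃ g ∈ Gset f T, Lambda f T g

/-- The `(f,T)`-non-wandering set `Ω(f,T)`. -/
def OmegaSet (f : Circle1 → ℝ) (T : Circle1 → Circle1) : Set Circle1 :=
  {x | ∀ ε > (0 : ℝ), ∃ n : ℕ, 1 ≤ n ∧ ∃ z : Circle1, T^[n] z = x ∧ dist z x < ε ∧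
    |∑ i ∈ Finset.range n, (f (T^[i] z) - beta f T)| < ε}

/-- `A` is a periodic orbit of `T`. -/
def IsPeriodicOrbit (T : Circle1 → Circle1) (A : Set Circle1) : Prop :=
  ∃ x : Circle1, (∃ n : ℕ, 0 < n ∧ T^[n] x = x) ∧ A = Set.range fun k : ℕ => T^[k] x

/-- `A` is a `T`-minimal set: a nonempty compact invariant set with no proper nonempty
compact invariant subset. -/
def IsMinimalSet (T : Circle1 → Circle1) (A : Set Circle1) : Prop :=
  A.Nonempty ∧ IsCompact A ∧ T '' A ⊆ A ∧
    ∀ B ⊆ A, B.Nonempty → IsCompact B → T '' B ⊆ B → B = A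

/-- The space of `C^r` families of functions on the circle with `q` parameters,
i.e. maps `(t,x) ↦ f_t(x)` that are jointly `C^r` (the circle variable via a lift). -/
def FamFun (r : ℕ∞) (q : ℕ) : Type :=
  {G : ((Fin q → ℝ) × ℝ) → ℝ // ContDiff ℝ r G ∧ ∀ t x, G (t, x + 1) = G (t, x)}

noncomputable def famSeq (r : ℕ∞) (q : ℕ) (G : ((Fin q → ℝ) × ℝ) → ℝ) :
    (k : ℕ) → (((Fin q → ℝ) × ℝ) →ᵤ (((Fin q → ℝ) × ℝ) [×k]→L[ℝ] ℝ)) :=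
  fun k => UniformFun.ofFun (if (k : ℕ∞) ≤ r then iteratedFDeriv ℝ k G else 0)

/-- The `C^r` topology on the space of `C^r` families. -/
noncomputable instance (r : ℕ∞) (q : ℕ) : TopologicalSpace (FamFun r q) :=
  TopologicalSpace.induced (fun G : FamFun r q => famSeq r q G.1) inferInstance

/-- The member `f_t : ℝ/ℤ → ℝ` of a family, at the parameter `t`. -/
noncomputable def famMem {r : ℕ∞} {q : ℕ} (G : FamFun r q) (t : Fin q → ℝ) : Circle1 → ℝ :=
  fun z => G.1 (t, rep z)

/-- The product `m_∞` over `ℕ` of Lebesgue measure on `[0,1]`, realised as the pushforward of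
the Haar probability measure of the compact group `(ℝ/ℤ)^ℕ` under the coordinatewise choice of
representatives in `[0,1)`. -/
noncomputable def mInfty : Measure (ℕ → ℝ) :=
  Measure.map (fun (t : ℕ → Circle1) (n : ℕ) => rep (t n))
    (MeasureTheory.Measure.addHaarMeasure (⊤ : TopologicalSpace.PositiveCompacts (ℕ → Circle1)))

/-- `S` is an `N`-dimensionally shy subset of a normed real vector space `V`. -/
def NDimShy {V : Type*} [NormedAddCommGroup V] [NormedSpace ℝ V] (N : ℕ) (S : Set V) : Prop :=
  ∃ φ : Fin N → V, ∀ f : V,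
    volume {t : Fin N → ℝ | (∀ i, t i ∈ Set.Icc (0 : ℝ) 1) ∧ f + ∑ i, t i • φ i ∈ S} = 0

/-- `S` is a finite dimensionally shy subset of a normed real vector space `V`. -/
def FinDimShy {V : Type*} [NormedAddCommGroup V] [NormedSpace ℝ V] (S : Set V) : Prop :=
  ∃ N : ℕ, 0 < N ∧ NDimShy N S

/-- `S` is a shy subset of `V`: there are a compactly supported Borel probability measure `μ`
on `V` and a Borel set `S̃ ⊇ S` all of whose translates are `μ`-null. -/
def IsShy {V : Type*} [NormedAddCommGroup V] [NormedSpace ℝ V] (S : Set V) : Prop :=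
  letI : MeasurableSpace V := borel V
  ∃ μ : Measure V, μ Set.univ = 1 ∧ (∃ K : Set V, IsCompact K ∧ μ K = 1) ∧
    ∃ St : Set V, MeasurableSet St ∧ S ⊆ St ∧
      ∀ v : V, μ ((fun x => x + v) ⁻¹' St) = 0

/-- `S` is a prevalent subset of `V`. -/
def IsPrevalent {V : Type*} [NormedAddCommGroup V] [NormedSpace ℝ V] (S : Set V) : Prop :=
  IsShy Sᶜ

/-- `F` is the (normalized) lift of an orientation-preserving real analytic expanding circle
map of degree `d` fixing `π(0)`. -/
def AnalyticExpandingLift (F : ℝ → ℝ) (d : ℕ) : Prop :=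
  (∀ x : ℝ, AnalyticAt ℝ F x) ∧ (∀ x : ℝ, F (x + 1) = F x + d) ∧ StrictMono F ∧ F 0 = 0 ∧
    2 ≤ d ∧ ∃ C > (0 : ℝ), ∃ l > (1 : ℝ), ∀ n : ℕ, 1 ≤ n → ∀ x : ℝ, C * l ^ n ≤ |deriv (F^[n]) x|

/-- The inverse branches `τ_{i,n} = τ_{i_n} ∘ ⋯ ∘ τ_{i_1}`, where `τ = F⁻¹` and
`τ_i(x) = τ(x+i)`; the word `i` is indexed from `0`, so `i 0` is the first letter `i_1`. -/
noncomputable def tauIter (F : ℝ → ℝ) {d : ℕ} (i : ℕ → Fin d) : ℕ → ℝ → ℝ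
  | 0, x => x
  | n + 1, x => Function.invFun F (tauIter F i n x + ((i n : ℕ) : ℝ))

/-- The function `h^f_i` associated to an infinite word `i`. -/
noncomputable def hSum (F : ℝ → ℝ) {d : ℕ} (i : ℕ → Fin d) (f : Circle1 → ℝ) : ℝ → ℝ :=
  fun x => ∑' n : ℕ,
    (f ((tauIter F i (n + 1) x : ℝ) : Circle1) - f ((tauIter F i (n + 1) 0 : ℝ) : Circle1))

/-- The function `h^f_i` associated to a finite word of length `m` (the first `m` letters
of `i`). -/
noncomputable def hSumFin (F : ℝ → ℝ) {d : ℕ} (i : ℕ → Fin d) (m : ℕ) (f : Circle1 → ℝ) :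
    ℝ → ℝ :=
  fun x => ∑ n ∈ Finset.range m,
    (f ((tauIter F i (n + 1) x : ℝ) : Circle1) - f ((tauIter F i (n + 1) 0 : ℝ) : Circle1))

/-- `i ∈ CL(x,K)`: all backward images of `x` along the word `i` lie over `K`. -/
def WordIn (F : ℝ → ℝ) {d : ℕ} (i : ℕ → Fin d) (x : ℝ) (K : Set Circle1) : Prop :=
  ∀ n : ℕ, 1 ≤ n → ((tauIter F i n x : ℝ) : Circle1) ∈ K

/-- `x` (a real, lying over `K`) is an `f`-supercritical value of `K`. -/
def IsSupercriticalValue (F : ℝ → ℝ) (d : ℕ) (f : Circle1 → ℝ) (K : Set Circle1) (x : ℝ) :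
    Prop :=
  ((x : ℝ) : Circle1) ∈ K ∧ ∃ i j : ℕ → Fin d, WordIn F i x K ∧ WordIn F j x K ∧ i 0 ≠ j 0 ∧
    deriv (hSum F i f) x = deriv (hSum F j f) x

/-- `x` is a critical value of `T|K`. -/
def IsCriticalValue (T : Circle1 → Circle1) (K : Set Circle1) (x : Circle1) : Prop :=
  x ∈ K ∧ ∃ y z, y ∈ K ∧ z ∈ K ∧ y ≠ z ∧ T y = x ∧ T z = x

/-- A critical value `x` of `T|K` is regular: on each side of `x` there is a continuous
inverse branch of `T` selecting the unique preimage in `K`. -/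
def IsRegularCriticalValue (T : Circle1 → Circle1) (K : Set Circle1) (x : Circle1) : Prop :=
  ∃ U : Set Circle1, U ∈ 𝓝 x ∧ IsConnected U ∧
    ∀ b ∈ U \ {x}, ∃ s : Circle1 → Circle1,
      ContinuousOn s (connectedComponentIn (U \ {x}) b) ∧
      (∀ y ∈ connectedComponentIn (U \ {x}) b, T (s y) = y) ∧
      (∀ y ∈ K ∩ connectedComponentIn (U \ {x}) b, T ⁻¹' {y} ∩ K = {s y})

/-- `T|K` is Sturmian-like: every critical value is regular. -/
def SturmianLike (T : Circle1 → Circle1) (K : Set Circle1) : Prop :=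
  ∀ x, IsCriticalValue T K x → IsRegularCriticalValue T K x

/-- `f : ℝ/ℤ → ℝ` is a trigonometric polynomial. -/
def IsTrigPoly (f : Circle1 → ℝ) : Prop :=
  ∃ m : ℕ, ∃ a b : ℕ → ℝ, ∀ x : ℝ,
    f ↑x = a 0 + ∑ k ∈ Finset.range m,
      (a (k + 1) * Real.cos (2 * Real.pi * (k + 1) * x) +
        b (k + 1) * Real.sin (2 * Real.pi * (k + 1) * x))

end

/-! ### Pulling back orbit segments -/

/-- Backward shadowing with constant `C`: every orbit segment `y, T y, …, Tⁿ y` can be replaced by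
a segment ending at a prescribed point `w`, at the cost of moving the initial point and changing
the Birkhoff sum of `f` by at most `C * dist w (Tⁿ y)`. The constant is uniform in `n`, and `w` need
not be close to `Tⁿ y`. -/
def HasPullback (f : Circle1 → ℝ) (T : Circle1 → Circle1) (C : ℝ) : Prop :=
  ∀ (n : ℕ) (y w : Circle1), ∃ z, T^[n] z = w ∧ dist z y ≤ C * dist w (T^[n] y) ∧
    |birkhoffSum T f n z - birkhoffSum T f n y| ≤ C * dist w (T^[n] y)

theorem coe_rep (z : Circle1) : ((rep z : ℝ) : Circle1) = z :=
  (AddCircle.equivIco 1 0).symm_apply_apply z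

theorem coe_add_int (x : ℝ) (k : ℤ) : ((x + k : ℝ) : Circle1) = (x : Circle1) := by
  have : ((k : ℝ) : Circle1) = 0 := (AddCircle.coe_eq_zero_iff 1).2 ⟨k, by simp⟩
  rw [AddCircle.coe_add, this, add_zero]

theorem lift_add_int {F : ℝ → ℝ} {d : ℤ} (hd : ∀ x : ℝ, F (x + 1) = F x + d) (k : ℤ) (x : ℝ) :
    F (x + k) = F x + k * d := by
  induction k using Int.induction_on with
  | zero => simp
  | succ i ih =>
    push_cast at ih ⊢
    rw [← add_assoc, hd, ih]
    ring
  | pred i ih =>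
    have h := hd (x + (-(i : ℝ) - 1))
    rw [show x + (-(i : ℝ) - 1) + 1 = x + -(i : ℝ) by ring] at h
    push_cast at ih ⊢
    rw [ih] at h
    linarith

theorem cmap_coe {F : ℝ → ℝ} (hF : ∃ d : ℤ, ∀ x : ℝ, F (x + 1) = F x + d) (x : ℝ) :
    cmap F (x : Circle1) = (F x : Circle1) := by
  obtain ⟨d, hd⟩ := hF
  have h1 : ((rep (x : Circle1) - x : ℝ) : Circle1) = 0 := by
    rw [AddCircle.coe_sub, coe_rep, sub_self]
  obtain ⟨k, hk⟩ := (AddCircle.coe_eq_zero_iff 1).1 h1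
  have h2 : rep (x : Circle1) = x + k := by
    simp only [zsmul_eq_mul, mul_one] at hk
    linarith
  have h3 := coe_add_int (F x) (k * d)
  rw [cmap, h2, lift_add_int hd]
  push_cast at h3
  exact h3

theorem iterate_cmap_coe {F : ℝ → ℝ} (hF : ∃ d : ℤ, ∀ x : ℝ, F (x + 1) = F x + d) (n : ℕ) (x : ℝ) :
    (cmap F)^[n] (x : Circle1) = (F^[n] x : Circle1) := by
  induction n generalizing x with
  | zero => rfl
  | succ n ih => rw [Function.iterate_succ_apply, Function.iterate_succ_apply, cmap_coe hF, ih]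

theorem continuous_cmap {F : ℝ → ℝ} (hc : Continuous F)
    (hF : ∃ d : ℤ, ∀ x : ℝ, F (x + 1) = F x + d) : Continuous (cmap F) := by
  have hq : IsQuotientMap ((↑) : ℝ → Circle1) := isQuotientMap_quotient_mk'
  rw [hq.continuous_iff]
  have : cmap F ∘ ((↑) : ℝ → Circle1) = fun x => (F x : Circle1) := funext (cmap_coe hF)
  rw [this]
  exact (AddCircle.continuous_mk' (1 : ℝ)).comp hc

theorem continuous_of_lift {f : Circle1 → ℝ} (hc : Continuous fun x : ℝ => f ↑x) :
    Continuous f := by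
  have hq : IsQuotientMap ((↑) : ℝ → Circle1) := isQuotientMap_quotient_mk'
  exact hq.continuous_iff.2 hc

theorem dist_coe_le (a b : ℝ) : dist (a : Circle1) (b : Circle1) ≤ |a - b| := by
  rw [dist_eq_norm, ← AddCircle.coe_sub, UnitAddCircle.norm_eq]
  simpa using round_le (a - b) 0

theorem exists_lift_dist (w : Circle1) (a : ℝ) :
    ∃ b : ℝ, (b : Circle1) = w ∧ |b - a| = dist w (a : Circle1) := by
  obtain ⟨c, rfl⟩ := QuotientAddGroup.mk_surjective w
  refine ⟨c - round (c - a), ?_, ?_⟩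
  · have h := coe_add_int c (-round (c - a))
    push_cast at h
    rw [sub_eq_add_neg]
    exact h
  · change _ = dist (c : Circle1) (a : Circle1)
    rw [dist_eq_norm, ← AddCircle.coe_sub, UnitAddCircle.norm_eq]
    congr 1
    ring

theorem lift_expand {F : ℝ → ℝ} (hF : ContDiff ℝ 1 F) {C l : ℝ}
    (h : ∀ n : ℕ, 1 ≤ n → ∀ x : ℝ, C * l ^ n ≤ |deriv (F^[n]) x|) {n : ℕ} (hn : 1 ≤ n) (a b : ℝ) :
    C * l ^ n * |a - b| ≤ |F^[n] a - F^[n] b| := by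
  have hd : Differentiable ℝ (F^[n]) := (hF.differentiable one_ne_zero).iterate n
  wlog hab : a < b generalizing a b
  · rcases eq_or_lt_of_le (not_lt.1 hab) with rfl | hab
    · simp
    · rw [abs_sub_comm a, abs_sub_comm (F^[n] a)]
      exact this b a hab
  obtain ⟨c, -, hc⟩ := exists_deriv_eq_slope (F^[n]) hab hd.continuous.continuousOn
    hd.differentiableOn
  have h1 := h n hn c
  have h2 : F^[n] b - F^[n] a = deriv (F^[n]) c * (b - a) := by
    rw [hc]
    field_simp [(sub_pos.2 hab).ne']
  rw [abs_sub_comm (F^[n] a), h2, abs_mul, abs_sub_comm a]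
  gcongr

theorem lift_surjective {F : ℝ → ℝ} (hc : Continuous F) (hi : Function.Injective F)
    (hF : ∃ d : ℤ, ∀ x : ℝ, F (x + 1) = F x + d) : Function.Surjective F := by
  obtain ⟨d, hd⟩ := hF
  have hd0 : d ≠ 0 := by
    rintro rfl
    have := hi (a₁ := (0 : ℝ) + 1) (a₂ := 0) (by simpa using hd 0)
    norm_num at this
  have hd1 : (1 : ℝ) ≤ (d : ℝ) * d := by
    have : 0 < d * d := mul_self_pos.2 hd0
    exact_mod_cast this
  intro y
  obtain ⟨N, hN⟩ := exists_nat_ge |y - F 0|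
  have hN' := abs_le.1 hN
  have e1 := lift_add_int hd (N * d) 0
  have e2 := lift_add_int hd (-(N * d)) 0
  push_cast at e1 e2
  have : (N : ℝ) ≤ N * (d * d) := le_mul_of_one_le_right (Nat.cast_nonneg N) hd1
  obtain ⟨x, hx⟩ := mem_range_of_exists_le_of_exists_ge hc
    ⟨_, show F (0 + -(N * d)) ≤ y by rw [e2]; nlinarith⟩
    ⟨_, show y ≤ F (0 + N * d) by rw [e1]; nlinarith⟩
  exact ⟨x, hx⟩

theorem lift_lipschitz {f : Circle1 → ℝ} (hf : ContDiff ℝ 1 fun x : ℝ => f ↑x) :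
    ∃ L : ℝ, 0 ≤ L ∧ ∀ a b : ℝ, |f a - f b| ≤ L * |a - b| := by
  have hper : Function.Periodic (deriv fun x : ℝ => f ↑x) 1 := by
    intro x
    rw [← deriv_comp_add_const]
    congr 1
    ext y
    simp
  obtain ⟨L, hL⟩ := (hper.isBounded_of_continuous one_ne_zero
    (hf.continuous_deriv le_rfl)).exists_norm_le
  have hL0 : 0 ≤ L := (norm_nonneg _).trans (hL _ ⟨0, rfl⟩)
  refine ⟨L, hL0, fun a b => ?_⟩
  have := Convex.norm_image_sub_le_of_norm_deriv_le (f := fun x : ℝ => f ↑x) (s := univ)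
    (fun x _ => (hf.differentiable one_ne_zero) x) (fun x _ => hL _ ⟨x, rfl⟩) convex_univ
    (mem_univ b) (mem_univ a)
  simpa [Real.norm_eq_abs] using this

/-- Inverse branches of `Fⁿ` contract at rate `C⁻¹ l⁻ⁿ`, so the errors along the pulled-back segment
are dominated by a geometric series. -/
theorem hasPullback (f : CrFun 1) (F : ExpMap 1) :
    ∃ C : ℝ, 0 ≤ C ∧ HasPullback f.1 (cmap F.1) C := by
  obtain ⟨f, hf⟩ := f
  obtain ⟨F, hFd, hper, C, hC, l, hl, hexp⟩ := F
  dsimp only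
  have hl0 : 0 < l := by linarith
  obtain ⟨L, hL0, hL⟩ := lift_lipschitz hf
  have hinj : Function.Injective F := by
    intro a b hab
    have := lift_expand hFd hexp le_rfl a b
    simp only [Function.iterate_one, hab, sub_self, abs_zero] at this
    have h2 : |a - b| ≤ 0 := by
      by_contra! h
      have : 0 < C * l ^ 1 * |a - b| := by positivity
      linarith
    exact sub_eq_zero.1 (abs_nonpos_iff.1 h2)
  have hsurj := lift_surjective hFd.continuous hinj hper
  have hcontr : ∀ (k : ℕ) (a b : ℝ), 1 ≤ k →
      |a - b| ≤ C⁻¹ * (l⁻¹) ^ k * |F^[k] a - F^[k] b| := by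
    intro k a b hk
    have := lift_expand hFd hexp hk a b
    rw [inv_pow, ← mul_inv, ← div_eq_inv_mul, le_div_iff₀ (by positivity)]
    linarith
  have hl1 : l⁻¹ < 1 := inv_lt_one_of_one_lt₀ hl
  set S : ℝ := (1 - l⁻¹)⁻¹ with hS
  have hS0 : 0 ≤ S := inv_nonneg.2 (by linarith)
  refine ⟨1 + C⁻¹ + L * C⁻¹ * S, by positivity, fun n y w => ?_⟩
  obtain ⟨a, rfl⟩ := QuotientAddGroup.mk_surjective y
  change ∃ z, _ ∧ dist z (a : Circle1) ≤ _ * dist w ((cmap F)^[n] (a : Circle1)) ∧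
    |_ - birkhoffSum (cmap F) f n (a : Circle1)| ≤ _ * dist w ((cmap F)^[n] (a : Circle1))
  rw [iterate_cmap_coe hper]
  obtain ⟨b, rfl, hb⟩ := exists_lift_dist w (F^[n] a)
  obtain ⟨c, hc⟩ := (hsurj.iterate n) b
  rw [← hb, ← hc]
  set D := |F^[n] c - F^[n] a| with hD
  have hD0 : 0 ≤ D := abs_nonneg _
  refine ⟨(c : Circle1), iterate_cmap_coe hper n c, ?_, ?_⟩
  · refine (dist_coe_le c a).trans ?_
    rcases Nat.eq_zero_or_pos n with rfl | hn
    · have h0 : |c - a| = D := rfl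
      rw [h0]
      have : 0 ≤ (C⁻¹ + L * C⁻¹ * S) * D := by positivity
      linarith
    · have h1 := hcontr n c a hn
      have h2 : C⁻¹ * (l⁻¹) ^ n * D ≤ C⁻¹ * 1 * D := by
        gcongr
        exact pow_le_one₀ (by positivity) hl1.le
      have : 0 ≤ (1 + L * C⁻¹ * S) * D := by positivity
      linarith
  · have h1 : |birkhoffSum (cmap F) f n (c : Circle1) - birkhoffSum (cmap F) f n (a : Circle1)|
        ≤ ∑ i ∈ Finset.range n, L * (C⁻¹ * (l⁻¹) ^ (n - 1 - i) * D) := by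
      rw [birkhoffSum, birkhoffSum, ← Finset.sum_sub_distrib]
      refine (Finset.abs_sum_le_sum_abs _ _).trans (Finset.sum_le_sum fun i hi => ?_)
      have hi' := Finset.mem_range.1 hi
      rw [iterate_cmap_coe hper, iterate_cmap_coe hper]
      refine (hL _ _).trans ?_
      gcongr
      have h2 := hcontr (n - i) (F^[i] c) (F^[i] a) (by omega)
      rw [← Function.iterate_add_apply, ← Function.iterate_add_apply,
        Nat.sub_add_cancel hi'.le] at h2
      refine h2.trans ?_
      have : l⁻¹ ^ (n - i) ≤ l⁻¹ ^ (n - 1 - i) :=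
        pow_le_pow_of_le_one (by positivity) hl1.le (by omega)
      gcongr
    have h2 : ∑ i ∈ Finset.range n, L * (C⁻¹ * (l⁻¹) ^ (n - 1 - i) * D)
        = L * C⁻¹ * (∑ i ∈ Finset.range n, (l⁻¹) ^ i) * D := by
      rw [← Finset.sum_range_reflect (fun i => (l⁻¹) ^ i), Finset.mul_sum, Finset.sum_mul]
      exact Finset.sum_congr rfl fun i _ => by ring
    have h3 : ∑ i ∈ Finset.range n, (l⁻¹) ^ i ≤ S := by
      rw [hS, ← tsum_geometric_of_lt_one (by positivity) hl1]
      exact (summable_geometric_of_lt_one (by positivity) hl1).sum_le_tsum _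
        (fun i _ => by positivity)
    rw [h2] at h1
    have h4 : L * C⁻¹ * (∑ i ∈ Finset.range n, (l⁻¹) ^ i) * D ≤ L * C⁻¹ * S * D := by gcongr
    have : 0 ≤ (1 + C⁻¹) * D := by positivity
    linarith

/-! ### Limits of empirical measures -/

/-- The empirical measure of the orbit segment `y, T y, …, Tⁿ⁻¹ y`; it is the zero measure when
`n = 0`. -/
noncomputable def empMeasure (T : Circle1 → Circle1) (n : ℕ) (y : Circle1) : Measure Circle1 :=
  ENNReal.ofReal ((n : ℝ)⁻¹) • ∑ i ∈ Finset.range n, Measure.dirac (T^[i] y)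

theorem isProbabilityMeasure_empMeasure (T : Circle1 → Circle1) {n : ℕ} (hn : 0 < n)
    (y : Circle1) : IsProbabilityMeasure (empMeasure T n y) := by
  have hn' : (0 : ℝ) < n := by exact_mod_cast hn
  constructor
  rw [empMeasure, Measure.smul_apply, Measure.finsetSum_apply]
  simp only [measure_univ, Finset.sum_const, Finset.card_range, nsmul_eq_mul, mul_one, smul_eq_mul]
  rw [← ENNReal.ofReal_natCast, ← ENNReal.ofReal_mul (by positivity), inv_mul_cancel₀ hn'.ne',
    ENNReal.ofReal_one]

theorem integral_empMeasure (T : Circle1 → Circle1) (n : ℕ) (y : Circle1) (φ : Circle1 → ℝ) :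
    ∫ x, φ x ∂(empMeasure T n y) = (n : ℝ)⁻¹ * birkhoffSum T φ n y := by
  rw [empMeasure, integral_smul_measure, integral_finsetSum_measure]
  · simp only [integral_dirac]
    rw [ENNReal.toReal_ofReal (by positivity), smul_eq_mul, birkhoffSum]
  · intro i _
    exact integrable_dirac (by simp)

theorem exists_bound {φ : Circle1 → ℝ} (hφ : Continuous φ) : ∃ B : ℝ, ∀ x, |φ x| ≤ B := by
  obtain ⟨B, hB⟩ := isCompact_univ.exists_bound_of_continuousOn hφ.continuousOn
  exact ⟨B, fun x => hB x (mem_univ x)⟩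

theorem integrable_of_continuous {φ : Circle1 → ℝ} (hφ : Continuous φ) (μ : Measure Circle1)
    [IsFiniteMeasure μ] : Integrable φ μ :=
  hφ.integrable_of_hasCompactSupport (HasCompactSupport.of_compactSpace φ)

/-- The Krylov–Bogolyubov construction: empirical measures of orbit segments whose lengths tend to
infinity accumulate on an invariant measure. The starting points may vary with the segment. -/
theorem exists_limit_measure {T : Circle1 → Circle1} (hT : Continuous T) (x : ℕ → Circle1)
    {ℓ : ℕ → ℕ} (hℓ : Tendsto ℓ atTop atTop) (hpos : ∀ k, 0 < ℓ k) :
    ∃ μ : Measure Circle1, InvProb T μ ∧ ∃ U : Filter ℕ, U.NeBot ∧ U ≤ atTop ∧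
      ∀ φ : Circle1 → ℝ, Continuous φ →
        Tendsto (fun k => (ℓ k : ℝ)⁻¹ * birkhoffSum T φ (ℓ k) (x k)) U (𝓝 (∫ y, φ y ∂μ)) := by
  let ν : ℕ → ProbabilityMeasure Circle1 := fun k =>
    ⟨empMeasure T (ℓ k) (x k), isProbabilityMeasure_empMeasure T (hpos k) (x k)⟩
  let U : Ultrafilter ℕ := hyperfilter ℕ
  have hU : (U : Filter ℕ) ≤ atTop := Nat.hyperfilter_le_atTop
  obtain ⟨μ, -, hμ⟩ := (isCompact_univ (X := ProbabilityMeasure Circle1)).ultrafilter_le_nhds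
    (U.map ν) (by simp)
  have hν : Tendsto ν U (𝓝 μ) := hμ
  have key : ∀ φ : Circle1 → ℝ, Continuous φ →
      Tendsto (fun k => (ℓ k : ℝ)⁻¹ * birkhoffSum T φ (ℓ k) (x k)) (U : Filter ℕ)
        (𝓝 (∫ y, φ y ∂(μ : Measure Circle1))) := by
    intro φ hφ
    have := ProbabilityMeasure.tendsto_iff_forall_integral_tendsto.1 hν
      (BoundedContinuousFunction.mkOfCompact ⟨φ, hφ⟩)
    refine this.congr fun k => ?_
    exact integral_empMeasure T (ℓ k) (x k) φ
  refine ⟨μ, ⟨inferInstance, ?_⟩, U, inferInstance, hU, key⟩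
  have hmap : IsProbabilityMeasure ((μ : Measure Circle1).map T) :=
    Measure.isProbabilityMeasure_map hT.aemeasurable
  refine ext_of_forall_integral_eq_of_IsFiniteMeasure fun φ => ?_
  rw [integral_map hT.aemeasurable φ.continuous.aestronglyMeasurable]
  refine tendsto_nhds_unique (key _ (φ.continuous.comp hT)) ?_
  have hlim := key _ φ.continuous
  obtain ⟨B, hB⟩ := exists_bound φ.continuous
  -- the Birkhoff sums of `φ ∘ T` and of `φ` differ by the two boundary terms
  have hdiff : Tendsto (fun k => (ℓ k : ℝ)⁻¹ * (φ (T^[ℓ k] (x k)) - φ (x k))) (U : Filter ℕ)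
      (𝓝 0) := by
    have h0 : Tendsto (fun k => (ℓ k : ℝ)⁻¹ * (2 * B)) (U : Filter ℕ) (𝓝 0) := by
      have := (tendsto_inv_atTop_zero.comp
        ((tendsto_natCast_atTop_atTop (R := ℝ)).comp (hℓ.mono_left hU))).mul_const (2 * B)
      simpa using this
    refine squeeze_zero_norm (fun k => ?_) h0
    rw [norm_mul, Real.norm_of_nonneg (by positivity : (0 : ℝ) ≤ (ℓ k : ℝ)⁻¹)]
    gcongr
    have h1 := abs_le.1 (hB (T^[ℓ k] (x k)))
    have h2 := abs_le.1 (hB (x k))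
    rw [Real.norm_eq_abs, abs_le]
    constructor <;> linarith
  have hsum := hlim.add hdiff
  rw [add_zero] at hsum
  refine hsum.congr fun k => ?_
  rw [← birkhoffSum_apply_sub_birkhoffSum, ← mul_add, add_sub_cancel]
  congr 1
  simp only [birkhoffSum, ← Function.iterate_succ_apply',
    ← Function.iterate_succ_apply]

theorem integral_birkhoffSum {f : Circle1 → ℝ} {T : Circle1 → Circle1} (hf : Continuous f)
    (hT : Continuous T) {μ : Measure Circle1} (hμ : InvProb T μ) (n : ℕ) :
    ∫ x, birkhoffSum T f n x ∂μ = n * ∫ x, f x ∂μ := by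
  obtain ⟨h1, h2⟩ := hμ
  have hmp : MeasurePreserving T μ μ := ⟨hT.measurable, h2⟩
  simp only [birkhoffSum]
  have hint : ∀ i ∈ Finset.range n, Integrable (fun x => f (T^[i] x)) μ :=
    fun i _ => integrable_of_continuous (hf.comp (hT.iterate i)) μ
  rw [integral_finsetSum _ hint]
  have : ∀ i ∈ Finset.range n, ∫ x, f (T^[i] x) ∂μ = ∫ x, f x ∂μ := by
    intro i _
    have h3 := hmp.iterate i
    rw [← integral_map h3.measurable.aemeasurable (by
      rw [h3.map_eq]; exact hf.aestronglyMeasurable), h3.map_eq]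
  rw [Finset.sum_congr rfl this]
  simp

theorem integral_le_beta {f : Circle1 → ℝ} {T : Circle1 → Circle1} (hf : Continuous f)
    {μ : Measure Circle1} (hμ : InvProb T μ) : ∫ x, f x ∂μ ≤ beta f T := by
  obtain ⟨B, hB⟩ := exists_bound hf
  refine le_csSup ⟨B, ?_⟩ ⟨μ, hμ, rfl⟩
  rintro _ ⟨ν, hν, rfl⟩
  have := hν.1
  have := integral_mono (integrable_of_continuous hf ν) (integrable_const B)
    (fun x => (abs_le.1 (hB x)).2)
  simpa using this

/-! ### Existence of a Lipschitz calibrated sub-action -/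

/-- The largest Birkhoff sum of length `n` along orbit segments ending at `x`. -/
noncomputable def maxSum (f : Circle1 → ℝ) (T : Circle1 → Circle1) (n : ℕ) (x : Circle1) : ℝ :=
  sSup (birkhoffSum T f n '' (T^[n] ⁻¹' {x}))

theorem circle_dist_le_one (x y : Circle1) : dist x y ≤ 1 := by
  rw [dist_eq_norm]
  have := AddCircle.norm_le_half_period (1 : ℝ) (x := x - y) one_ne_zero
  rw [abs_one] at this
  linarith

section Subaction

variable {f : Circle1 → ℝ} {T : Circle1 → Circle1} {C : ℝ}

theorem continuous_birkhoffSum (hf : Continuous f) (hT : Continuous T) (n : ℕ) :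
    Continuous (birkhoffSum T f n) :=
  continuous_finsetSum _ fun i _ => hf.comp (hT.iterate i)

theorem isCompact_sums (hf : Continuous f) (hT : Continuous T) (n : ℕ) (x : Circle1) :
    IsCompact (birkhoffSum T f n '' (T^[n] ⁻¹' {x})) :=
  ((isClosed_singleton.preimage (hT.iterate n)).isCompact).image (continuous_birkhoffSum hf hT n)

theorem le_maxSum (hf : Continuous f) (hT : Continuous T) (n : ℕ) (y : Circle1) :
    birkhoffSum T f n y ≤ maxSum f T n (T^[n] y) :=
  le_csSup (isCompact_sums hf hT n _).bddAbove ⟨y, rfl, rfl⟩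

theorem exists_eq_maxSum (hf : Continuous f) (hT : Continuous T) (hP : HasPullback f T C) (n : ℕ)
    (x : Circle1) : ∃ y, T^[n] y = x ∧ birkhoffSum T f n y = maxSum f T n x := by
  obtain ⟨z, hz, -⟩ := hP n x x
  exact (isCompact_sums hf hT n x).sSup_mem ⟨_, z, hz, rfl⟩

theorem maxSum_le_add (hf : Continuous f) (hT : Continuous T) (hP : HasPullback f T C) (n : ℕ)
    (x x' : Circle1) : maxSum f T n x ≤ maxSum f T n x' + C * dist x x' := by
  obtain ⟨y, rfl, hy⟩ := exists_eq_maxSum hf hT hP n x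
  obtain ⟨z, rfl, -, hz⟩ := hP n y x'
  have h1 := le_maxSum hf hT n z
  have h2 := (abs_le.1 hz).1
  rw [dist_comm] at h2
  linarith

theorem maxSum_add_le (hf : Continuous f) (hT : Continuous T) (hP : HasPullback f T C) (n : ℕ)
    (y : Circle1) : maxSum f T n y + f y ≤ maxSum f T (n + 1) (T y) := by
  obtain ⟨z, rfl, hz⟩ := exists_eq_maxSum hf hT hP n y
  have := le_maxSum hf hT (n + 1) z
  rw [birkhoffSum_succ, Function.iterate_succ_apply'] at this
  linarith

theorem exists_maxSum_succ (hf : Continuous f) (hT : Continuous T) (hP : HasPullback f T C)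
    (n : ℕ) (x : Circle1) : ∃ y, T y = x ∧ maxSum f T (n + 1) x ≤ maxSum f T n y + f y := by
  obtain ⟨z, hz, hz'⟩ := exists_eq_maxSum hf hT hP (n + 1) x
  refine ⟨T^[n] z, by rw [← Function.iterate_succ_apply' T, hz], ?_⟩
  rw [← hz', birkhoffSum_succ]
  have := le_maxSum hf hT n z
  linarith

/-- Copies of one segment can be concatenated with an error `C` per junction. -/
theorem exists_concat (hC : 0 ≤ C) (hP : HasPullback f T C) (n : ℕ) (y : Circle1) (k : ℕ)
    (x : Circle1) :
    ∃ z, T^[n * k] z = x ∧ k * (birkhoffSum T f n y - C) ≤ birkhoffSum T f (n * k) z := by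
  induction k generalizing x with
  | zero => exact ⟨x, by simp⟩
  | succ k ih =>
    obtain ⟨w, hw, -, hw'⟩ := hP n y x
    obtain ⟨z, hz, hz'⟩ := ih w
    refine ⟨z, ?_, ?_⟩
    · rw [Nat.mul_succ, add_comm, Function.iterate_add_apply, hz, hw]
    · rw [Nat.mul_succ, birkhoffSum_add, hz]
      have h1 := (abs_le.1 hw').1
      have h2 : C * dist x (T^[n] y) ≤ C * 1 := by
        gcongr
        exact circle_dist_le_one _ _
      push_cast
      linarith

/-- Repeating a segment with large Birkhoff sum produces an invariant measure with large integral,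
so no Birkhoff sum exceeds `n β` by more than `C`. -/
theorem birkhoffSum_le (hf : Continuous f) (hT : Continuous T) (hC : 0 ≤ C)
    (hP : HasPullback f T C) (n : ℕ) (y : Circle1) :
    birkhoffSum T f n y ≤ n * beta f T + C := by
  rcases Nat.eq_zero_or_pos n with rfl | hn
  · simpa using hC
  have hn' : (0 : ℝ) < n := by exact_mod_cast hn
  choose z hz hz' using fun k => exists_concat hC hP n y (k + 1) y
  have hℓ : Tendsto (fun k => n * (k + 1)) atTop atTop :=
    tendsto_atTop_mono (fun k => show k ≤ n * (k + 1) by nlinarith) tendsto_id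
  obtain ⟨μ, hμ, U, hU, -, hlim⟩ := exists_limit_measure hT z hℓ fun k => by positivity
  have h1 : (birkhoffSum T f n y - C) / n ≤ ∫ x, f x ∂μ := by
    refine ge_of_tendsto' (hlim f hf) fun k => ?_
    have h2 := hz' k
    push_cast at h2 ⊢
    rw [← div_eq_inv_mul, div_le_div_iff₀ hn' (by positivity)]
    nlinarith
  have h2 := h1.trans (integral_le_beta hf hμ)
  rw [div_le_iff₀ hn'] at h2
  linarith

theorem exists_invProb (hT : Continuous T) : ∃ μ, InvProb T μ := by
  obtain ⟨μ, hμ, -⟩ := exists_limit_measure hT (fun _ => 0) (tendsto_add_atTop_nat 1)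
    fun k => Nat.succ_pos k
  exact ⟨μ, hμ⟩

theorem exists_le_birkhoffSum (hf : Continuous f) (hT : Continuous T) (n : ℕ) :
    ∃ y, n * beta f T ≤ birkhoffSum T f n y := by
  rcases Nat.eq_zero_or_pos n with rfl | hn
  · exact ⟨0, by simp⟩
  have hn' : (0 : ℝ) < n := by exact_mod_cast hn
  obtain ⟨y, -, hy⟩ := isCompact_univ.exists_isMaxOn univ_nonempty
    (continuous_birkhoffSum hf hT n).continuousOn
  refine ⟨y, ?_⟩
  have h : beta f T ≤ birkhoffSum T f n y / n := by
    obtain ⟨μ₀, hμ₀⟩ := exists_invProb hT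
    refine csSup_le ⟨_, μ₀, hμ₀, rfl⟩ ?_
    rintro _ ⟨μ, hμ, rfl⟩
    have := hμ.1
    have h1 := integral_mono (integrable_of_continuous (continuous_birkhoffSum hf hT n) μ)
      (integrable_const (birkhoffSum T f n y)) (fun x => hy (mem_univ x))
    rw [integral_birkhoffSum hf hT hμ] at h1
    rw [le_div_iff₀ hn']
    simp only [integral_const, probReal_univ, one_smul] at h1
    linarith
  rw [le_div_iff₀ hn'] at h
  linarith

theorem abs_maxSum_sub_le (hf : Continuous f) (hT : Continuous T) (hC : 0 ≤ C)
    (hP : HasPullback f T C) (n : ℕ) (x : Circle1) :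
    |maxSum f T n x - n * beta f T| ≤ C := by
  rw [abs_le]
  constructor
  · obtain ⟨y, hy⟩ := exists_le_birkhoffSum hf hT n
    have h1 := le_maxSum hf hT n y
    have h2 := maxSum_le_add hf hT hP n (T^[n] y) x
    have h3 : C * dist (T^[n] y) x ≤ C * 1 := by
      gcongr
      exact circle_dist_le_one _ _
    linarith
  · obtain ⟨y, -, hy⟩ := exists_eq_maxSum hf hT hP n x
    have := birkhoffSum_le hf hT hC hP n y
    linarith

/-- The function `x ↦ limsup (maxSum f T n x - n β)` is a Lipschitz calibrated sub-action: the
normalized maximal sums are uniformly bounded and equi-Lipschitz, and the recursion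
`maxSum (n + 1) x = max_{T y = x} (maxSum n y + f y)` passes to the limit superior. -/
theorem Gset_nonempty (hf : Continuous f) (hT : Continuous T) (hC : 0 ≤ C)
    (hP : HasPullback f T C) : (Gset f T).Nonempty := by
  set b := beta f T with hb
  set v : ℕ → Circle1 → ℝ := fun n x => maxSum f T n x - n * b with hv
  have hvb : ∀ n x, |v n x| ≤ C := abs_maxSum_sub_le hf hT hC hP
  have hbdd : ∀ x, IsBoundedUnder (· ≤ ·) atTop fun n => v n x := fun x =>
    isBoundedUnder_of ⟨C, fun n => (abs_le.1 (hvb n x)).2⟩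
  have hcob : ∀ x, IsCoboundedUnder (· ≤ ·) atTop fun n => v n x := fun x =>
    IsBoundedUnder.isCoboundedUnder_le (isBoundedUnder_of ⟨-C, fun n => (abs_le.1 (hvb n x)).1⟩)
  set g : Circle1 → ℝ := fun x => limsup (fun n => v n x) atTop with hg
  have hlt : ∀ x, ∀ ε > 0, ∀ᶠ n in atTop, v n x < g x + ε := fun x ε hε =>
    eventually_lt_of_limsup_lt (lt_add_of_pos_right _ hε) (hbdd x)
  have hgt : ∀ x, ∀ ε > 0, ∃ᶠ n in atTop, g x - ε < v n x := fun x ε hε =>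
    frequently_lt_of_lt_limsup (hcob x) (sub_lt_self _ hε)
  have hvlip : ∀ n x x', v n x ≤ v n x' + C * dist x x' := by
    intro n x x'
    have := maxSum_le_add hf hT hP n x x'
    simp only [hv]
    linarith
  have hlip : LipschitzWith C.toNNReal g := by
    refine LipschitzWith.of_le_add_mul _ fun x y => ?_
    rw [Real.coe_toNNReal _ hC]
    refine le_of_forall_pos_le_add fun ε hε => ?_
    refine limsup_le_of_le (hcob x) ?_
    filter_upwards [hlt y ε hε] with n hn
    have := hvlip n x y
    linarith
  have hsub : ∀ x, g x + f x ≤ g (T x) + b := by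
    intro x
    refine le_of_forall_pos_le_add fun ε hε => ?_
    have : g x ≤ g (T x) + b + ε - f x := by
      refine limsup_le_of_le (hcob x) ?_
      filter_upwards [(tendsto_add_atTop_nat 1).eventually (hlt (T x) ε hε)] with n hn
      have := maxSum_add_le hf hT hP n x
      simp only [hv] at hn ⊢
      push_cast at hn
      linarith
    linarith
  refine ⟨g, ⟨_, hlip⟩, ⟨hlip.continuous, hsub⟩, fun x => ?_⟩
  have hex : ∀ k : ℕ, ∃ n ≥ k, ∃ y, T y = x ∧ g x - 1 / ((k : ℝ) + 1) ≤ v n y + f y - b := by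
    intro k
    obtain ⟨m, hm, hm'⟩ := frequently_atTop.1 (hgt x (1 / ((k : ℝ) + 1)) (by positivity)) (k + 1)
    obtain ⟨n, rfl⟩ : ∃ n, m = n + 1 := ⟨m - 1, by omega⟩
    obtain ⟨y, hy, hy'⟩ := exists_maxSum_succ hf hT hP n x
    refine ⟨n, by omega, y, hy, ?_⟩
    simp only [hv] at hm' ⊢
    push_cast at hm'
    linarith
  choose n hn y hy hgy using hex
  obtain ⟨y₀, φ, hφ, hlim⟩ := CompactSpace.tendsto_subseq y
  have hy₀ : T y₀ = x := by
    refine tendsto_nhds_unique ((hT.tendsto y₀).comp hlim) ?_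
    simp only [Function.comp_def, hy]
    exact tendsto_const_nhds
  refine ⟨y₀, hy₀, le_antisymm (hy₀ ▸ hsub y₀) ?_⟩
  refine le_of_forall_pos_le_add fun ε hε => ?_
  have hn' : Tendsto (fun k => n (φ k)) atTop atTop :=
    tendsto_atTop_mono (fun k => (hφ.id_le k).trans (hn (φ k))) tendsto_id
  have h1 : Tendsto (fun k => g x - 1 / ((φ k : ℝ) + 1) + b - f (y (φ k)) - C * dist (y (φ k)) y₀)
      atTop (𝓝 (g x - 0 + b - f y₀ - C * 0)) := by
    refine (((tendsto_const_nhds.sub ?_).add_const b).sub ((hf.tendsto y₀).comp hlim)).sub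
      ((tendsto_iff_dist_tendsto_zero.1 hlim).const_mul C)
    exact (tendsto_one_div_add_atTop_nhds_zero_nat (𝕜 := ℝ)).comp hφ.tendsto_atTop
  have h2 : g x - 0 + b - f y₀ - C * 0 ≤ g y₀ + ε := by
    refine le_of_tendsto h1 ?_
    filter_upwards [hn'.eventually (hlt y₀ ε hε)] with k hk
    have h3 := hgy (φ k)
    have h4 := hvlip (n (φ k)) (y (φ k)) y₀
    linarith
  linarith

end Subaction

/-! ### The non-wandering set is contained in every `Λ_{f,T,g}` -/

section Omega

variable {f : Circle1 → ℝ} {T : Circle1 → Circle1} {g : Circle1 → ℝ} {C : ℝ}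

theorem sum_sub_beta (f : Circle1 → ℝ) (T : Circle1 → Circle1) (n : ℕ) (z : Circle1) :
    ∑ i ∈ Finset.range n, (f (T^[i] z) - beta f T) = birkhoffSum T f n z - n * beta f T := by
  simp [birkhoffSum]

/-- Return times in the definition of `Ω(f,T)` can be taken arbitrarily large: if the return times
for `ε → 0` stay bounded, then `x` itself is periodic with vanishing normalized Birkhoff sum, and
multiples of its period can be used. -/
theorem omega_large (hf : Continuous f) (hT : Continuous T) {x : Circle1}
    (hx : x ∈ OmegaSet f T) (N : ℕ) {ε : ℝ} (hε : 0 < ε) :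
    ∃ n ≥ N, ∃ z, T^[n] z = x ∧ dist z x < ε ∧
      |birkhoffSum T f n z - n * beta f T| < ε := by
  by_contra! hcon
  have hex : ∀ k : ℕ, ∃ n, 1 ≤ n ∧ n < N ∧ ∃ z, T^[n] z = x ∧ dist z x < 1 / ((k : ℝ) + 1) ∧
      |birkhoffSum T f n z - n * beta f T| < 1 / ((k : ℝ) + 1) := by
    intro k
    obtain ⟨n, hn, z, hz, hz1, hz2⟩ := hx (min ε (1 / ((k : ℝ) + 1))) (by positivity)
    rw [sum_sub_beta] at hz2
    refine ⟨n, hn, ?_, z, hz, hz1.trans_le (min_le_right _ _), hz2.trans_le (min_le_right _ _)⟩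
    by_contra! hNn
    exact absurd (hz2.trans_le (min_le_left _ _))
      (not_lt.2 (hcon n hNn z hz (hz1.trans_le (min_le_left _ _))))
  choose n hn1 hnN z hz hzd hzs using hex
  obtain ⟨m, -, hm⟩ : ∃ m ∈ Finset.range N, ∃ᶠ k in atTop, n k = m := by
    by_contra! hno
    have : ∀ᶠ k in atTop, ∀ m ∈ Finset.range N, n k ≠ m :=
      (Finset.eventually_all _).2 hno
    obtain ⟨k, hk⟩ := this.exists
    exact hk (n k) (Finset.mem_range.2 (hnN k)) rfl
  have h0 : Tendsto (fun k : ℕ => 1 / ((k : ℝ) + 1)) atTop (𝓝 0) :=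
    tendsto_one_div_add_atTop_nhds_zero_nat
  have hzlim : Tendsto z atTop (𝓝 x) :=
    tendsto_iff_dist_tendsto_zero.2
      (squeeze_zero (fun _ => dist_nonneg) (fun k => (hzd k).le) h0)
  have hm1 : 1 ≤ m := by
    obtain ⟨k, hk⟩ := hm.exists
    exact hk ▸ hn1 k
  have hper : T^[m] x = x := by
    have : T^[m] x ∈ ({x} : Set Circle1) := by
      refine isClosed_singleton.mem_of_frequently_of_tendsto (hm.mono fun k hk => ?_)
        (((hT.iterate m).tendsto x).comp hzlim)
      rw [mem_singleton_iff, Function.comp_apply, ← hk, hz]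
    exact this
  have hzero : birkhoffSum T f m x - m * beta f T = 0 := by
    have hlim := ((((continuous_birkhoffSum hf hT m).tendsto x).comp hzlim).sub_const
      (m * beta f T)).abs.sub h0
    have : |birkhoffSum T f m x - m * beta f T| - 0 ∈ Iic (0 : ℝ) := by
      refine isClosed_Iic.mem_of_frequently_of_tendsto (hm.mono fun k hk => ?_) hlim
      have := hzs k
      rw [hk] at this
      simp only [Function.comp_apply, mem_Iic]
      linarith
    rw [sub_zero, mem_Iic] at this
    exact abs_nonpos_iff.1 this
  have hmul : ∀ j : ℕ, T^[m * j] x = x ∧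
      birkhoffSum T f (m * j) x - (m * j : ℕ) * beta f T = 0 := by
    intro j
    induction j with
    | zero => simp
    | succ j ih =>
      obtain ⟨ih1, ih2⟩ := ih
      constructor
      · rw [Nat.mul_succ, Function.iterate_add_apply, hper, ih1]
      · rw [Nat.mul_succ, birkhoffSum_add, ih1]
        push_cast at ih2 ⊢
        linarith
  obtain ⟨h1, h2⟩ := hmul N
  have := hcon (m * N) (Nat.le_mul_of_pos_left N hm1) x h1 (by simpa using hε)
  rw [h2, abs_zero] at this
  linarith

theorem birkhoffSum_defect (f : Circle1 → ℝ) (T : Circle1 → Circle1) (g : Circle1 → ℝ) (n : ℕ)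
    (z : Circle1) :
    birkhoffSum T (fun y => g (T y) + beta f T - g y - f y) n z =
      g (T^[n] z) - g z - (birkhoffSum T f n z - n * beta f T) := by
  induction n with
  | zero => simp
  | succ n ih =>
    rw [birkhoffSum_succ, ih, birkhoffSum_succ, Function.iterate_succ_apply']
    push_cast
    ring

/-- Along the segments witnessing `x ∈ Ω(f,T)` the non-negative defects `g ∘ T + β - g - f` sum to
almost zero, so they vanish along the limits of these segments. -/
theorem omega_subset_lambda (hf : Continuous f) (hT : Continuous T) (hg : IsSubaction f T g) :
    OmegaSet f T ⊆ Lambda f T g := by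
  intro x hx
  obtain ⟨hgc, hgs⟩ := hg
  refine mem_iInter.2 fun m => ?_
  set h : Circle1 → ℝ := fun y => g (T y) + beta f T - g y - f y with hh
  have hhc : Continuous h := (((hgc.comp hT).add_const _).sub hgc).sub hf
  have hh0 : ∀ y, 0 ≤ h y := fun y => by
    have := hgs y
    simp only [hh]
    linarith
  choose n hn z hz hzd hzs using fun k : ℕ =>
    omega_large hf hT hx (m + k) (ε := 1 / ((k : ℝ) + 1)) (by positivity)
  have h0 : Tendsto (fun k : ℕ => 1 / ((k : ℝ) + 1)) atTop (𝓝 0) :=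
    tendsto_one_div_add_atTop_nhds_zero_nat
  have hzlim : Tendsto z atTop (𝓝 x) :=
    tendsto_iff_dist_tendsto_zero.2
      (squeeze_zero (fun _ => dist_nonneg) (fun k => (hzd k).le) h0)
  have hS : Tendsto (fun k => birkhoffSum T h (n k) (z k)) atTop (𝓝 0) := by
    have h1 : Tendsto (fun k => birkhoffSum T f (n k) (z k) - n k * beta f T) atTop (𝓝 0) :=
      squeeze_zero_norm (fun k => (hzs k).le) h0
    have h2 := (tendsto_const_nhds (x := g x)).sub ((hgc.tendsto x).comp hzlim) |>.sub h1
    rw [sub_self, sub_zero] at h2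
    refine h2.congr fun k => ?_
    rw [birkhoffSum_defect, hz]
    rfl
  have hle : ∀ k i, i < n k → h (T^[i] (z k)) ≤ birkhoffSum T h (n k) (z k) := fun k i hi =>
    Finset.single_le_sum (f := fun i => h (T^[i] (z k))) (fun _ _ => hh0 _)
      (Finset.mem_range.2 hi)
  obtain ⟨y, φ, hφ, hy⟩ := CompactSpace.tendsto_subseq fun k => T^[n k - m] (z k)
  have hTm : T^[m] y = x := by
    refine tendsto_nhds_unique (((hT.iterate m).tendsto y).comp hy) ?_
    refine tendsto_const_nhds.congr fun k => ?_
    have := hn (φ k)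
    simp only [Function.comp_apply]
    rw [← Function.iterate_add_apply, show m + (n (φ k) - m) = n (φ k) by omega, hz]
  have hzero : ∀ i, h (T^[i] y) ≤ 0 := by
    intro i
    by_cases hi : i < m
    · refine le_of_tendsto_of_tendsto' ((hhc.comp (hT.iterate i)).tendsto y |>.comp hy)
        (hS.comp hφ.tendsto_atTop) fun k => ?_
      have := hn (φ k)
      simp only [Function.comp_apply]
      rw [← Function.iterate_add_apply]
      exact hle _ _ (by omega)
    · obtain ⟨j, rfl⟩ := Nat.exists_eq_add_of_le (not_lt.1 hi)
      rw [add_comm, Function.iterate_add_apply, hTm]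
      refine le_of_tendsto_of_tendsto ((hhc.comp (hT.iterate j)).tendsto x |>.comp hzlim) hS ?_
      filter_upwards [eventually_gt_atTop j] with k hk
      have := hn k
      exact hle _ _ (by omega)
  refine ⟨y, fun i => ?_, hTm⟩
  have h1 := hzero i
  have h2 := hh0 (T^[i] y)
  simp only [hh] at h1 h2
  change g _ + f _ = g _ + beta f T
  linarith

/-! ### Limit sets of points of `Λ_{f,T,g}` -/

/-- The `ω`-limit set of `x`. -/
def omegaLim (T : Circle1 → Circle1) (x : Circle1) : Set Circle1 :=
  {a | ∀ ε > (0 : ℝ), ∀ N : ℕ, ∃ n ≥ N, dist (T^[n] x) a < ε}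

/-- The `α`-limit set of `x` within `L`: the accumulation points of the `n`-th preimages of `x`
lying in `L`, as `n → ∞`, all backward branches being taken together. -/
def alphaLim (T : Circle1 → Circle1) (L : Set Circle1) (x : Circle1) : Set Circle1 :=
  {a | ∀ ε > (0 : ℝ), ∀ N : ℕ, ∃ n ≥ N, ∃ y ∈ L, T^[n] y = x ∧ dist y a < ε}

theorem omegaLim_nonempty (T : Circle1 → Circle1) (x : Circle1) : (omegaLim T x).Nonempty := by
  obtain ⟨a, φ, hφ, ha⟩ := CompactSpace.tendsto_subseq fun n => T^[n] x
  refine ⟨a, fun ε hε N => ?_⟩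
  obtain ⟨k, hk, hk'⟩ := ((Metric.tendsto_nhds.1 ha ε hε).and (eventually_ge_atTop N)).exists
  exact ⟨φ k, hk'.trans (hφ.id_le k), hk⟩

theorem isClosed_omegaLim (T : Circle1 → Circle1) (x : Circle1) : IsClosed (omegaLim T x) := by
  refine isClosed_of_closure_subset fun a ha ε hε N => ?_
  obtain ⟨c, hc, hca⟩ := Metric.mem_closure_iff.1 ha (ε / 2) (by linarith)
  obtain ⟨n, hn, hn'⟩ := hc (ε / 2) (by linarith) N
  refine ⟨n, hn, ?_⟩
  have := dist_triangle (T^[n] x) c a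
  rw [dist_comm] at hca
  linarith

theorem map_mem_omegaLim (hT : Continuous T) {x a : Circle1} (ha : a ∈ omegaLim T x) :
    T a ∈ omegaLim T x := by
  intro ε hε N
  obtain ⟨δ, hδ, h⟩ := Metric.continuous_iff.1 hT a ε hε
  obtain ⟨n, hn, hn'⟩ := ha δ hδ N
  refine ⟨n + 1, by omega, ?_⟩
  rw [Function.iterate_succ_apply']
  exact h _ hn'

theorem omegaLim_subset {A : Set Circle1} (hA : IsClosed A) (hTA : ∀ a ∈ A, T a ∈ A) {x : Circle1}
    (hx : x ∈ A) : omegaLim T x ⊆ A := by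
  intro a ha
  rw [← hA.closure_eq, Metric.mem_closure_iff]
  intro ε hε
  obtain ⟨n, -, hn⟩ := ha ε hε 0
  refine ⟨T^[n] x, ?_, by rwa [dist_comm]⟩
  clear hn
  induction n with
  | zero => exact hx
  | succ n ih =>
    rw [Function.iterate_succ_apply']
    exact hTA _ ih

theorem alphaLim_nonempty {L : Set Circle1} {x : Circle1} (hx : ∀ n : ℕ, x ∈ T^[n] '' L) :
    (alphaLim T L x).Nonempty := by
  choose y hyL hy using hx
  obtain ⟨a, φ, hφ, ha⟩ := CompactSpace.tendsto_subseq y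
  refine ⟨a, fun ε hε N => ?_⟩
  obtain ⟨k, hk, hk'⟩ := ((Metric.tendsto_nhds.1 ha ε hε).and (eventually_ge_atTop N)).exists
  exact ⟨φ k, hk'.trans (hφ.id_le k), _, hyL _, hy _, hk⟩

theorem isClosed_alphaLim (T : Circle1 → Circle1) (L : Set Circle1) (x : Circle1) :
    IsClosed (alphaLim T L x) := by
  refine isClosed_of_closure_subset fun a ha ε hε N => ?_
  obtain ⟨c, hc, hca⟩ := Metric.mem_closure_iff.1 ha (ε / 2) (by linarith)
  obtain ⟨n, hn, y, hyL, hy, hn'⟩ := hc (ε / 2) (by linarith) N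
  refine ⟨n, hn, y, hyL, hy, ?_⟩
  have := dist_triangle y c a
  rw [dist_comm] at hca
  linarith

theorem map_mem_alphaLim (hT : Continuous T) {L : Set Circle1} (hL : ∀ a ∈ L, T a ∈ L)
    {x a : Circle1} (ha : a ∈ alphaLim T L x) : T a ∈ alphaLim T L x := by
  intro ε hε N
  obtain ⟨δ, hδ, h⟩ := Metric.continuous_iff.1 hT a ε hε
  obtain ⟨n, hn, y, hyL, hy, hn'⟩ := ha δ hδ (N + 1)
  refine ⟨n - 1, by omega, T y, hL y hyL, ?_, h _ hn'⟩
  rw [← Function.iterate_succ_apply, show (n - 1).succ = n by omega, hy]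

theorem alphaLim_subset {L : Set Circle1} (hL : IsClosed L) (x : Circle1) :
    alphaLim T L x ⊆ L := by
  intro a ha
  rw [← hL.closure_eq, Metric.mem_closure_iff]
  intro ε hε
  obtain ⟨n, -, y, hyL, -, hy⟩ := ha ε hε 0
  exact ⟨y, hyL, by rwa [dist_comm]⟩

theorem map_mem_lambdaStar {a : Circle1} (ha : a ∈ LambdaStar f T g) :
    T a ∈ LambdaStar f T g := by
  intro n
  rw [← Function.iterate_succ_apply]
  exact ha (n + 1)

theorem isClosed_lambdaStar (hf : Continuous f) (hT : Continuous T) (hg : Continuous g) :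
    IsClosed (LambdaStar f T g) := by
  have : LambdaStar f T g = ⋂ n : ℕ, T^[n] ⁻¹' Eset f T g := by
    ext x
    simp [LambdaStar]
  rw [this]
  refine isClosed_iInter fun n => IsClosed.preimage (hT.iterate n) ?_
  exact isClosed_eq (hg.add hf) ((hg.comp hT).add_const _)

theorem birkhoffSum_of_mem_lambdaStar {y : Circle1} (hy : y ∈ LambdaStar f T g) (n : ℕ) :
    birkhoffSum T f n y - n * beta f T = g (T^[n] y) - g y := by
  have h1 := birkhoffSum_defect f T g n y
  have h2 : birkhoffSum T (fun y => g (T y) + beta f T - g y - f y) n y = 0 := by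
    refine Finset.sum_eq_zero fun i _ => ?_
    have : g (T^[i] y) + f (T^[i] y) = g (T (T^[i] y)) + beta f T := hy i
    linarith
  linarith

/-- Every non-empty closed invariant subset of `Λ*_{f,T,g}` carries a maximizing measure. -/
theorem exists_maximizing (hf : Continuous f) (hT : Continuous T) (hg : Continuous g)
    {A : Set Circle1} (hA : IsClosed A) (hne : A.Nonempty) (hTA : ∀ a ∈ A, T a ∈ A)
    (hAL : A ⊆ LambdaStar f T g) : ∃ μ, IsMaximizing f T μ ∧ μ Aᶜ = 0 := by
  obtain ⟨a, ha⟩ := hne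
  have horb : ∀ n, T^[n] a ∈ A := by
    intro n
    induction n with
    | zero => exact ha
    | succ n ih =>
      rw [Function.iterate_succ_apply']
      exact hTA _ ih
  obtain ⟨μ, hμ, U, hU, hUle, hlim⟩ := exists_limit_measure hT (fun _ => a)
    (tendsto_add_atTop_nat 1) fun k => Nat.succ_pos k
  have := hμ.1
  refine ⟨μ, ⟨hμ, ?_⟩, ?_⟩
  · refine tendsto_nhds_unique (hlim f hf) ?_
    obtain ⟨B, hB⟩ := exists_bound hg
    have h0 : Tendsto (fun k : ℕ => 1 / ((k : ℝ) + 1) * (2 * B)) atTop (𝓝 0) := by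
      simpa using (tendsto_one_div_add_atTop_nhds_zero_nat (𝕜 := ℝ)).mul_const (2 * B)
    have h1 : Tendsto (fun k : ℕ => 1 / ((k : ℝ) + 1) * (g (T^[k + 1] a) - g a)) atTop (𝓝 0) := by
      refine squeeze_zero_norm (fun k => ?_) h0
      rw [norm_mul, Real.norm_of_nonneg (by positivity : (0 : ℝ) ≤ 1 / ((k : ℝ) + 1))]
      gcongr
      have h1 := abs_le.1 (hB (T^[k + 1] a))
      have h2 := abs_le.1 (hB a)
      rw [Real.norm_eq_abs, abs_le]
      constructor <;> linarith
    have h2 := (h1.mono_left hUle).const_add (beta f T)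
    rw [add_zero] at h2
    refine h2.congr fun k => ?_
    rw [← birkhoffSum_of_mem_lambdaStar (hAL ha)]
    push_cast
    field_simp
    ring
  · have hc : Continuous fun y => Metric.infDist y A := Metric.continuous_infDist_pt A
    have hz : ∫ y, Metric.infDist y A ∂μ = 0 := by
      refine tendsto_nhds_unique (hlim _ hc) ?_
      refine tendsto_const_nhds.congr fun k => ?_
      have : birkhoffSum T (fun y => Metric.infDist y A) (k + 1) a = 0 :=
        Finset.sum_eq_zero fun i _ => Metric.infDist_zero_of_mem (horb i)
      rw [this, mul_zero]
    have hae := (integral_eq_zero_iff_of_nonneg (fun y => Metric.infDist_nonneg)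
      (integrable_of_continuous hc μ)).1 hz
    have : ∀ᵐ y ∂μ, y ∈ A := by
      filter_upwards [hae] with y hy
      exact (hA.mem_iff_infDist_zero ⟨a, ha⟩).2 hy
    exact this

/-- The orbit of a point of `Λ*` returns near each of its `ω`-limit points with small normalized
Birkhoff sum, and these returns can be closed up by pulling back. -/
theorem omegaLim_subset_omegaSet (hC : 0 ≤ C) (hP : HasPullback f T C) {K : NNReal}
    (hg : LipschitzWith K g) {x : Circle1} (hx : x ∈ LambdaStar f T g) :
    omegaLim T x ⊆ OmegaSet f T := by
  intro a ha ε hε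
  have hK : (0 : ℝ) ≤ K := K.2
  obtain ⟨δ, hδ, hδε⟩ : ∃ δ > 0, δ * (C + 1 + 2 * K) = ε :=
    ⟨ε / (C + 1 + 2 * K), by positivity, by field_simp⟩
  obtain ⟨n, -, hn⟩ := ha δ hδ 0
  obtain ⟨m, hm, hm'⟩ := ha δ hδ (n + 1)
  obtain ⟨p, rfl⟩ := Nat.exists_eq_add_of_le (show n ≤ m by omega)
  have hy : T^[n] x ∈ LambdaStar f T g := by
    intro i
    rw [← Function.iterate_add_apply]
    exact hx (i + n)
  rw [add_comm, Function.iterate_add_apply] at hm'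
  set y := T^[n] x
  obtain ⟨z, hz, hzd, hzs⟩ := hP p y a
  have hb := birkhoffSum_of_mem_lambdaStar hy p
  have hgd := hg.dist_le_mul (T^[p] y) y
  have htri := dist_triangle_right (T^[p] y) y a
  rw [dist_comm a] at hzd hzs
  have hCd : C * dist (T^[p] y) a ≤ C * δ := by gcongr
  have hKd : (K : ℝ) * dist (T^[p] y) y ≤ K * (2 * δ) := by
    gcongr
    linarith
  rw [Real.dist_eq] at hgd
  refine ⟨p, by omega, z, hz, ?_, ?_⟩
  · have := dist_triangle z y a
    have : 0 ≤ δ * (2 * K) := by positivity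
    linarith
  · rw [sum_sub_beta]
    have h1 := abs_le.1 hzs
    have h2 := abs_le.1 hgd
    rw [abs_lt]
    constructor <;> linarith

/-- If some point is both an `α`-limit and an `ω`-limit point of `x`, then the forward orbit of `x`
can be joined to a backward orbit of `x` near that point, which makes `x` non-wandering. -/
theorem mem_omegaSet_of_inter (hC : 0 ≤ C) (hP : HasPullback f T C) {K : NNReal}
    (hg : LipschitzWith K g) {x a : Circle1} (hx : x ∈ LambdaStar f T g)
    (ha : a ∈ alphaLim T (LambdaStar f T g) x) (hw : a ∈ omegaLim T x) : x ∈ OmegaSet f T := by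
  intro ε hε
  have hK : (0 : ℝ) ≤ K := K.2
  obtain ⟨δ, hδ, hδε⟩ : ∃ δ > 0, δ * (2 * C + 1 + 2 * K) = ε :=
    ⟨ε / (2 * C + 1 + 2 * K), by positivity, by field_simp⟩
  obtain ⟨k, hk, hk'⟩ := hw δ hδ 1
  obtain ⟨m, -, y, hyL, hy, hya⟩ := ha δ hδ 0
  obtain ⟨z, hz, hzd, hzs⟩ := hP k x y
  have hb1 := birkhoffSum_of_mem_lambdaStar hx k
  have hb2 := birkhoffSum_of_mem_lambdaStar hyL m
  rw [hy] at hb2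
  have htri := dist_triangle_right y (T^[k] x) a
  have hgd := hg.dist_le_mul (T^[k] x) y
  rw [Real.dist_eq, dist_comm] at hgd
  have hd : dist y (T^[k] x) ≤ 2 * δ := by linarith
  have hCd : C * dist y (T^[k] x) ≤ C * (2 * δ) := by gcongr
  have hKd : (K : ℝ) * dist y (T^[k] x) ≤ K * (2 * δ) := by gcongr
  refine ⟨k + m, by omega, z, ?_, ?_, ?_⟩
  · rw [add_comm, Function.iterate_add_apply, hz, hy]
  · have : 0 ≤ δ * (2 * K) := by positivity
    linarith
  · rw [sum_sub_beta, birkhoffSum_add, hz]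
    have h1 := abs_le.1 hzs
    have h2 := abs_le.1 hgd
    push_cast
    rw [abs_lt]
    constructor <;> linarith

/-- The statement for an arbitrary continuous system with the backward shadowing property. -/
theorem Kset_eq_omega_of_hasPullback (hf : Continuous f) (hT : Continuous T) (hC : 0 ≤ C)
    (hP : HasPullback f T C)
    (h : IsMinimalSet T (OmegaSet f T) ∨ ∃! μ : Measure Circle1, IsMaximizing f T μ) :
    Kset f T = OmegaSet f T := by
  refine Subset.antisymm ?_ ?_
  · intro x hx
    obtain ⟨g, ⟨⟨K, hg⟩, hcal⟩, hxg⟩ := mem_iUnion₂.1 hx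
    have hxn : ∀ n : ℕ, x ∈ T^[n] '' LambdaStar f T g := mem_iInter.1 hxg
    have hxL : x ∈ LambdaStar f T g := by simpa using hxn 0
    have hLc := isClosed_lambdaStar hf hT hg.continuous
    have hAc := isClosed_alphaLim T (LambdaStar f T g) x
    have hAT : ∀ a ∈ alphaLim T (LambdaStar f T g) x, T a ∈ alphaLim T (LambdaStar f T g) x :=
      fun a ha => map_mem_alphaLim hT (fun _ => map_mem_lambdaStar) ha
    have hAL := alphaLim_subset (T := T) hLc x
    have hWL := omegaLim_subset hLc (fun _ => map_mem_lambdaStar) hxL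
    have hAne := alphaLim_nonempty hxn
    suffices hint : (alphaLim T (LambdaStar f T g) x ∩ omegaLim T x).Nonempty by
      obtain ⟨a, ha, hw⟩ := hint
      exact mem_omegaSet_of_inter hC hP hg hxL ha hw
    rcases h with ⟨-, -, -, hmin⟩ | ⟨μ, -, huniq⟩
    · -- by minimality the `ω`-limit sets of `x` and of any `α`-limit point of `x` agree with `Ω`
      have heq : ∀ y ∈ LambdaStar f T g, omegaLim T y = OmegaSet f T := fun y hy =>
        hmin _ (omegaLim_subset_omegaSet hC hP hg hy) (omegaLim_nonempty T y)
          (isClosed_omegaLim T y).isCompact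
          (by rintro _ ⟨a, ha, rfl⟩; exact map_mem_omegaLim hT ha)
      obtain ⟨a, ha⟩ := hAne
      obtain ⟨b, hb⟩ := omegaLim_nonempty T a
      refine ⟨b, omegaLim_subset hAc hAT ha hb, ?_⟩
      rwa [heq x hxL, ← heq a (hAL ha)]
    · -- both limit sets have full measure for the unique maximizing measure
      obtain ⟨μ₁, h₁, hμ₁⟩ := exists_maximizing hf hT hg.continuous hAc hAne hAT hAL
      obtain ⟨μ₂, h₂, hμ₂⟩ := exists_maximizing hf hT hg.continuous (isClosed_omegaLim T x)
        (omegaLim_nonempty T x) (fun _ ha => map_mem_omegaLim hT ha) hWL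
      rw [huniq μ₁ h₁] at hμ₁ h₁
      rw [huniq μ₂ h₂] at hμ₂
      have := h₁.1.1
      by_contra hemp
      rw [not_nonempty_iff_eq_empty] at hemp
      have hnull := measure_union_null hμ₁ hμ₂
      rw [← compl_inter, hemp, compl_empty, measure_univ] at hnull
      exact one_ne_zero hnull
  · obtain ⟨g, hg⟩ := Gset_nonempty hf hT hC hP
    exact fun x hx => mem_iUnion₂.2 ⟨g, hg, omega_subset_lambda hf hT hg.2.1 hx⟩

end Omega

/-- Lemma 2.5: if `Ω(f,T)` is `T`-minimal, or if `(f,T)` has a unique maximizing measure,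
then `K(f,T) = Ω(f,T)`. -/
theorem Kset_eq_omega (f : CrFun 1) (F : ExpMap 1)
    (h : IsMinimalSet (cmap F.1) (OmegaSet f.1 (cmap F.1)) ∨
      (∃! μ : Measure Circle1, IsMaximizing f.1 (cmap F.1) μ)) :
    Kset f.1 (cmap F.1) = OmegaSet f.1 (cmap F.1) := by
  obtain ⟨C, hC, hP⟩ := hasPullback f F
  have hf : Continuous f.1 := continuous_of_lift f.2.continuous
  have hT : Continuous (cmap F.1) := continuous_cmap F.2.1.continuous F.2.2.1
  exact Kset_eq_omega_of_hasPullback hf hT hC hP h
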